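/- Under Assumptions 1–2, √(n−k)·D(P̂^{(n)} ‖ P̄) → 0 almost surely as n → ∞, where D denotes the Kullback–Leibler divergence between the empirical (k+1)-block distribution and the stationary (k+1)-block distribution; the same holds with P̂^{(n)} and P̄ replaced by any pair of corresponding marginal distributions. -/

import Mathlib

open MeasureTheory Filter Finset
open scoped BigOperators Topology ENNReal NNReal Classical

namespace DIG

/-- Extended-real logarithm: `⊥` on nonpositive reals, so that the log-likelihood of an
impossible observation is `-∞`. -/
noncomputable def elog (x : ℝ) : EReal := if x ≤ 0 then (⊥ : EReal) else ((Real.log x : ℝ) : EReal)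

/-- A block of length `L` over the alphabet `𝒳`. -/
abbrev Blk (𝒳 : Type*) (L : ℕ) : Type _ := Fin L → 𝒳

/-- A joint history of the three processes: three `k`-blocks. -/
abbrev Hist (𝒳 : Type*) (k : ℕ) : Type _ := Blk 𝒳 k × Blk 𝒳 k × Blk 𝒳 k

/-- A joint symbol of the three processes. -/
abbrev Sym (𝒳 : Type*) : Type _ := 𝒳 × 𝒳 × 𝒳

variable {𝒳 : Type*} [Fintype 𝒳] [DecidableEq 𝒳] [Nonempty 𝒳]
variable {Ω : Type*} [MeasurableSpace Ω]

/-- The real-valued measure of a set. -/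
noncomputable def mreal (μ : MeasureTheory.Measure Ω) (s : Set Ω) : ℝ := (μ s).toReal

/-- Kullback-Leibler divergence between two pmfs on a finite set (with the usual
`0 log 0 = 0` convention, automatic since `0 * x = 0`). -/
noncomputable def KLfin {S : Type*} [Fintype S] (p q : S → ℝ) : ℝ :=
  ∑ s, p s * Real.log (p s / q s)

/-- Shannon entropy of a pmf on a finite set. -/
noncomputable def Hent {S : Type*} [Fintype S] (p : S → ℝ) : ℝ :=
  -∑ s, p s * Real.log (p s)

/-- Pushforward (marginal) of a pmf along a map of finite sets. -/
noncomputable def pushf {S T : Type*} [Fintype S] [DecidableEq T] (g : S → T) (p : S → ℝ) :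
    T → ℝ := fun t => ∑ s, if g s = t then p s else 0

/-! ### Marginals of a joint distribution of `(k+1)`-blocks of three processes -/

/-- Marginal of `(Y₁ᵏ, Z₁ᵏ⁺¹)`. -/
noncomputable def margYkZ {k : ℕ} (p : Blk 𝒳 (k+1) → Blk 𝒳 (k+1) → Blk 𝒳 (k+1) → ℝ)
    (β : Blk 𝒳 k) (c : Blk 𝒳 (k+1)) : ℝ :=
  ∑ a : Blk 𝒳 (k+1), ∑ yl : 𝒳, p a (Fin.snoc β yl) c

/-- Marginal of `(Y₁ᵏ⁺¹, Z₁ᵏ⁺¹)`. -/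
noncomputable def margYZ {k : ℕ} (p : Blk 𝒳 (k+1) → Blk 𝒳 (k+1) → Blk 𝒳 (k+1) → ℝ)
    (b c : Blk 𝒳 (k+1)) : ℝ :=
  ∑ a : Blk 𝒳 (k+1), p a b c

/-- Marginal of `(X₁ᵏ⁺¹, Y₁ᵏ, Z₁ᵏ⁺¹)`. -/
noncomputable def margXYkZ {k : ℕ} (p : Blk 𝒳 (k+1) → Blk 𝒳 (k+1) → Blk 𝒳 (k+1) → ℝ)
    (a : Blk 𝒳 (k+1)) (β : Blk 𝒳 k) (c : Blk 𝒳 (k+1)) : ℝ :=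
  ∑ yl : 𝒳, p a (Fin.snoc β yl) c

/-- Marginal of `(X₁ᵏ, Y₁ᵏ, Z₁ᵏ)` (the first `k` coordinates of each block). -/
noncomputable def margK {k : ℕ} (p : Blk 𝒳 (k+1) → Blk 𝒳 (k+1) → Blk 𝒳 (k+1) → ℝ)
    (α β γ : Blk 𝒳 k) : ℝ :=
  ∑ xl : 𝒳, ∑ yl : 𝒳, ∑ zl : 𝒳, p (Fin.snoc α xl) (Fin.snoc β yl) (Fin.snoc γ zl)

/-- Conditional mutual information `I(Y_{k+1}; X₁ᵏ⁺¹ | Y₁ᵏ, Z₁ᵏ⁺¹)` computed under the joint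
pmf `p` of the three `(k+1)`-blocks. -/
noncomputable def condMI {k : ℕ} (p : Blk 𝒳 (k+1) → Blk 𝒳 (k+1) → Blk 𝒳 (k+1) → ℝ) : ℝ :=
  ∑ a : Blk 𝒳 (k+1), ∑ b : Blk 𝒳 (k+1), ∑ c : Blk 𝒳 (k+1),
    p a b c * Real.log ((p a b c * margYkZ p (Fin.init b) c) /
      (margYZ p b c * margXYkZ p a (Fin.init b) c))

/-! ### Transition matrices and factorization (absence of the edge `X → Y`) -/

/-- `Q` is a transition probability matrix for the joint `k`-th order Markov process. -/
def IsTransMat {k : ℕ} (Q : Hist 𝒳 k → Sym 𝒳 → ℝ) : Prop :=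
  (∀ h s, 0 ≤ Q h s) ∧ (∀ h, ∑ s : Sym 𝒳, Q h s = 1)

/-- The factorization of the transition matrix expressing the absence of the edge `X → Y`:
`Q(x',y',z' | hx,hy,hz) = Q1(x',z' | hx,hy,hz) · Q2(y' | hy, (hz,z'))`. -/
def IsFactorized {k : ℕ} (Q : Hist 𝒳 k → Sym 𝒳 → ℝ) : Prop :=
  ∃ (Q1 : Hist 𝒳 k → 𝒳 × 𝒳 → ℝ) (Q2 : Blk 𝒳 k × Blk 𝒳 (k+1) → 𝒳 → ℝ),
    (∀ h p, 0 ≤ Q1 h p) ∧ (∀ h, ∑ p : 𝒳 × 𝒳, Q1 h p = 1) ∧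
    (∀ h y, 0 ≤ Q2 h y) ∧ (∀ h, ∑ y : 𝒳, Q2 h y = 1) ∧
    (∀ (hx hy hz : Blk 𝒳 k) (x' y' z' : 𝒳),
      Q (hx, hy, hz) (x', y', z') = Q1 (hx, hy, hz) (x', z') * Q2 (hy, Fin.snoc hz z') y')

/-! ### The process, stationarity, Markov property, Assumption 3 -/

/-- The event that the length-`L` blocks of the three processes starting at time `t`
equal `(a, b, c)`. -/
def blockEvent (X Y Z : ℕ → Ω → 𝒳) (t L : ℕ) (a b c : Blk 𝒳 L) : Set Ω :=
  {ω | ∀ i : Fin L, X (t + i) ω = a i ∧ Y (t + i) ω = b i ∧ Z (t + i) ω = c i}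

/-- Joint stationarity of the three processes. -/
def Stationary (μ : MeasureTheory.Measure Ω) (X Y Z : ℕ → Ω → 𝒳) : Prop :=
  ∀ (t L : ℕ) (a b c : Blk 𝒳 L),
    μ (blockEvent X Y Z t L a b c) = μ (blockEvent X Y Z 0 L a b c)

/-- The joint process is Markov of order `k` with transition matrix `Q`: conditionally on the
entire past, the next joint symbol is distributed according to `Q` applied to the last
`k`-block of the past. -/
def MarkovOfOrder (μ : MeasureTheory.Measure Ω) (X Y Z : ℕ → Ω → 𝒳) (k : ℕ)
    (Q : Hist 𝒳 k → Sym 𝒳 → ℝ) : Prop :=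
  ∀ (j : ℕ) (pa pb pc : Blk 𝒳 j) (a b c : Blk 𝒳 k) (s : Sym 𝒳),
    mreal μ (blockEvent X Y Z 0 j pa pb pc ∩ blockEvent X Y Z j k a b c ∩
        {ω | X (j + k) ω = s.1 ∧ Y (j + k) ω = s.2.1 ∧ Z (j + k) ω = s.2.2})
      = Q (a, b, c) s *
        mreal μ (blockEvent X Y Z 0 j pa pb pc ∩ blockEvent X Y Z j k a b c)

/-- Assumption 3: `Y_{k+1}` is conditionally independent of the past `(Y₋∞⁰, Z₋∞⁰)` given
`(Y₁ᵏ, Z₁ᵏ⁺¹)` (stated at every time shift `j`, which by stationarity is the one-sided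
form of the two-sided statement). -/
def CondIndepPast (μ : MeasureTheory.Measure Ω) (X Y Z : ℕ → Ω → 𝒳) (k : ℕ) : Prop :=
  ∀ (j : ℕ) (py pz : Blk 𝒳 j) (b : Blk 𝒳 k) (c : Blk 𝒳 (k+1)) (y : 𝒳),
    mreal μ ({ω | Y (j + k) ω = y} ∩
        {ω | (∀ i : Fin k, Y (j + i) ω = b i) ∧ (∀ i : Fin (k+1), Z (j + i) ω = c i)} ∩
        {ω | ∀ i : Fin j, Y i ω = py i ∧ Z i ω = pz i}) *
      mreal μ {ω | (∀ i : Fin k, Y (j + i) ω = b i) ∧ (∀ i : Fin (k+1), Z (j + i) ω = c i)}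
    = mreal μ ({ω | Y (j + k) ω = y} ∩
        {ω | (∀ i : Fin k, Y (j + i) ω = b i) ∧ (∀ i : Fin (k+1), Z (j + i) ω = c i)}) *
      mreal μ ({ω | (∀ i : Fin k, Y (j + i) ω = b i) ∧ (∀ i : Fin (k+1), Z (j + i) ω = c i)} ∩
        {ω | ∀ i : Fin j, Y i ω = py i ∧ Z i ω = pz i})

/-- Measurability of the elementary events of the process. -/
def MeasProc (X Y Z : ℕ → Ω → 𝒳) : Prop :=
  ∀ (i : ℕ) (x : 𝒳), MeasurableSet {ω | X i ω = x} ∧ MeasurableSet {ω | Y i ω = x} ∧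
    MeasurableSet {ω | Z i ω = x}

/-! ### Empirical distribution, plug-in directed information, log-likelihoods -/

/-- Empirical distribution of `(k+1)`-blocks of three sample sequences of length `n`. -/
noncomputable def empDistSeq (x y z : ℕ → 𝒳) (k n : ℕ) (a b c : Blk 𝒳 (k+1)) : ℝ :=
  ((n - k : ℕ) : ℝ)⁻¹ * ∑ t ∈ Finset.range (n - k),
    if ∀ i : Fin (k+1), x (t + i) = a i ∧ y (t + i) = b i ∧ z (t + i) = c i then 1 else 0

/-- Empirical distribution of `(k+1)`-blocks of the three processes (random). -/
noncomputable def empDist (X Y Z : ℕ → Ω → 𝒳) (k n : ℕ) (a b c : Blk 𝒳 (k+1)) (ω : Ω) : ℝ :=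
  empDistSeq (fun i => X i ω) (fun i => Y i ω) (fun i => Z i ω) k n a b c

/-- The stationary `(k+1)`-block distribution `P̄`. -/
noncomputable def statDist (μ : MeasureTheory.Measure Ω) (X Y Z : ℕ → Ω → 𝒳) (k : ℕ)
    (a b c : Blk 𝒳 (k+1)) : ℝ :=
  mreal μ (blockEvent X Y Z 0 (k+1) a b c)

/-- Plug-in estimator of the directed information:
`Î_n^{(k)}(X→Y‖Z) = I(Ŷ_{k+1}; X̂₁ᵏ⁺¹ | Ŷ₁ᵏ, Ẑ₁ᵏ⁺¹)` under the empirical distribution. -/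
noncomputable def empMI (X Y Z : ℕ → Ω → 𝒳) (k n : ℕ) (ω : Ω) : ℝ :=
  condMI (fun a b c => empDist X Y Z k n a b c ω)

/-- Log-likelihood (extended-real valued) of the samples under transition matrix `Q`. -/
noncomputable def loglikSeq {k : ℕ} (Q : Hist 𝒳 k → Sym 𝒳 → ℝ) (x y z : ℕ → 𝒳) (n : ℕ) :
    EReal :=
  ∑ i ∈ Finset.Ico k n,
    elog (Q (fun j : Fin k => x (i - k + j), fun j : Fin k => y (i - k + j),
      fun j : Fin k => z (i - k + j)) (x i, y i, z i))

/-- Log-likelihood of the process samples under transition matrix `Q`. -/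
noncomputable def loglik {k : ℕ} (Q : Hist 𝒳 k → Sym 𝒳 → ℝ) (X Y Z : ℕ → Ω → 𝒳) (n : ℕ)
    (ω : Ω) : EReal :=
  loglikSeq Q (fun i => X i ω) (fun i => Y i ω) (fun i => Z i ω) n

/-- The Neyman–Pearson log-likelihood ratio `Λ_{xy,n}`: the maximal log-likelihood over all
transition matrices minus the maximal log-likelihood over the factorized (null-hypothesis)
transition matrices. -/
noncomputable def Lambda (X Y Z : ℕ → Ω → 𝒳) (k n : ℕ) (ω : Ω) : EReal :=
  sSup {L : EReal | ∃ Q : Hist 𝒳 k → Sym 𝒳 → ℝ, IsTransMat Q ∧ L = loglik Q X Y Z n ω} -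
  sSup {L : EReal | ∃ Q : Hist 𝒳 k → Sym 𝒳 → ℝ, IsTransMat Q ∧ IsFactorized Q ∧
    L = loglik Q X Y Z n ω}

/-! ### Chi-squared distribution and convergence in distribution -/

/-- The chi-squared distribution with `f` degrees of freedom: the Gamma distribution with
shape `f/2` and rate `1/2`. -/
noncomputable def chiSq (f : ℝ) : MeasureTheory.Measure ℝ :=
  ProbabilityTheory.gammaMeasure (f / 2) (1 / 2)

/-- `W n` converges in distribution (weakly) to `ν` as `n → ∞`. -/
def TendstoInDist (μ : MeasureTheory.Measure Ω) (W : ℕ → Ω → ℝ)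
    (ν : MeasureTheory.Measure ℝ) : Prop :=
  ∀ f : BoundedContinuousFunction ℝ ℝ,
    Tendsto (fun n => ∫ ω, f (W n ω) ∂μ) atTop (𝓝 (∫ x, f x ∂ν))

/-- Conditional mutual information `I(U; V | W)` of finitely-valued random variables. -/
noncomputable def cmiRV {A B C : Type*} [Fintype A] [Fintype B] [Fintype C]
    [DecidableEq A] [DecidableEq B] [DecidableEq C]
    (μ : MeasureTheory.Measure Ω) (U : Ω → A) (V : Ω → B) (W : Ω → C) : ℝ :=
  ∑ a : A, ∑ b : B, ∑ c : C,
    mreal μ {ω | U ω = a ∧ V ω = b ∧ W ω = c} *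
      Real.log ((mreal μ {ω | U ω = a ∧ V ω = b ∧ W ω = c} * mreal μ {ω | W ω = c}) /
        (mreal μ {ω | U ω = a ∧ W ω = c} * mreal μ {ω | V ω = b ∧ W ω = c}))

end DIG

namespace DIG

/-!
The divergence is squeezed by `0 ≤ D(p ‖ q) ≤ ∑ (p - q)² / q`, so it suffices that the empirical
frequency of every value deviates from its probability by `o(n ^ (-s / 2))` for all `s < 1`; values
of probability zero are almost surely never visited.

For the deviations, view the three processes as one Markov chain of order `k`. Positivity of `Q`
makes harmonic functions constant (maximum principle), so the Poisson equation is solvable for every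
centred function `f` of the `(k + 1)`-windows: `f` is a martingale difference plus a coboundary. The
coboundary telescopes to a bounded term. The martingale differences `d t` are bounded, hence
`∑ d t / (t + 1) ^ r` converges almost surely for `r > 1 / 2` by `L²`-boundedness, and Kronecker's
lemma gives `∑_{t < n} d t = o(n ^ r)`.
-/

open Asymptotics

theorem isLittleO_sum_of_tendsto_sum_div {x b : ℕ → ℝ} {L : ℝ} (hb : Monotone b)
    (hb₀ : ∀ n, b n ≠ 0) (hb_top : Tendsto b atTop atTop)
    (hx : Tendsto (fun n ↦ ∑ t ∈ range n, x t / b t) atTop (𝓝 L)) :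
    (fun n ↦ ∑ t ∈ range n, x t) =o[atTop] b := by
  set z : ℕ → ℝ := fun n ↦ ∑ t ∈ range n, x t / b t - L with hz
  have hz_zero : z =o[atTop] (1 : ℕ → ℝ) :=
    (isLittleO_one_iff ℝ).2 (by simpa [hz] using hx.sub_const L)
  have abel_summation : (fun n ↦ ∑ t ∈ range n, x t) = fun n ↦
      z n * b n - z 0 * b 0 - ∑ t ∈ range n, z (t + 1) * (b (t + 1) - b t) := by
    funext n
    induction n with
    | zero => simp
    | succ n ih =>
      have hz_succ : z (n + 1) = z n + x n / b n := by simp only [hz, sum_range_succ]; ring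
      rw [sum_range_succ, ih, sum_range_succ, hz_succ]
      field_simp [hb₀ n]
      ring
  have boundary : (fun n ↦ z n * b n) =o[atTop] b := by
    simpa using hz_zero.mul_isBigO (isBigO_refl b atTop)
  have initial (c : ℝ) : (fun _ : ℕ ↦ c) =o[atTop] b :=
    isLittleO_const_left.2 (.inr (tendsto_norm_atTop_atTop.comp hb_top))
  have increments_top : Tendsto (fun n ↦ ∑ t ∈ range n, (b (t + 1) - b t)) atTop atTop := by
    simp only [sum_range_sub]
    exact tendsto_atTop_add_const_right _ (-b 0) hb_top
  have interior : (fun n ↦ ∑ t ∈ range n, z (t + 1) * (b (t + 1) - b t)) =o[atTop] b := by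
    have hterm : (fun t ↦ z (t + 1) * (b (t + 1) - b t)) =o[atTop] fun t ↦ b (t + 1) - b t := by
      simpa using (hz_zero.comp_tendsto (tendsto_add_atTop_nat 1)).mul_isBigO
        (isBigO_refl (fun t ↦ b (t + 1) - b t) atTop)
    have hsum := hterm.sum_range (fun t ↦ sub_nonneg.2 (hb t.le_succ)) increments_top
    simp only [sum_range_sub] at hsum
    exact hsum.trans_isBigO ((isBigO_refl b atTop).sub (initial (b 0)).isBigO)
  rw [abel_summation]
  exact (boundary.sub (initial _)).sub interior

lemma isBigO_natCast_succ :
    (fun n : ℕ ↦ ((n + 1 : ℕ) : ℝ)) =O[atTop] fun n : ℕ ↦ (n : ℝ) := by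
  refine .of_bound 2 ?_
  filter_upwards [eventually_ge_atTop 1] with n hn
  have hn' : (1 : ℝ) ≤ n := by exact_mod_cast hn
  simp only [Real.norm_natCast]
  push_cast
  linarith

/-- A sequence of martingale differences, `d t` being revealed at time `t + 1`. Integrability is
left to the individual results: `condExp` of a non-integrable function is zero by convention. -/
structure IsMartingaleDifference {Ω : Type*} {m : MeasurableSpace Ω} (d : ℕ → Ω → ℝ)
    (ℱ : Filtration ℕ m) (μ : Measure Ω) : Prop where
  stronglyMeasurable : ∀ t, StronglyMeasurable[ℱ (t + 1)] (d t)
  condExp_eq_zero : ∀ t, μ[d t | ℱ t] =ᵐ[μ] 0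

namespace IsMartingaleDifference

variable {Ω : Type*} {m : MeasurableSpace Ω} {μ : Measure Ω} {ℱ : Filtration ℕ m}
  {d : ℕ → Ω → ℝ}

lemma const_mul (hd : IsMartingaleDifference d ℱ μ) (a : ℕ → ℝ) :
    IsMartingaleDifference (fun t ω ↦ a t * d t ω) ℱ μ where
  stronglyMeasurable t := (hd.stronglyMeasurable t).const_mul (a t)
  condExp_eq_zero t := by
    have pull_out : μ[fun ω ↦ a t * d t ω | ℱ t] =ᵐ[μ] a t • μ[d t | ℱ t] :=
      condExp_smul (a t) (d t) (ℱ t)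
    filter_upwards [pull_out, hd.condExp_eq_zero t] with ω h_pull h_zero
    simp [h_pull, h_zero]

lemma stronglyMeasurable_sum (hd : IsMartingaleDifference d ℱ μ) (n : ℕ) :
    StronglyMeasurable[ℱ n] (fun ω ↦ ∑ t ∈ range n, d t ω) :=
  Finset.stronglyMeasurable_fun_sum _ fun t ht ↦
    (hd.stronglyMeasurable t).mono (ℱ.mono (mem_range.1 ht))

lemma martingale_sum [IsFiniteMeasure μ] (hd : IsMartingaleDifference d ℱ μ)
    (hint : ∀ t, Integrable (d t) μ) :
    Martingale (fun n ω ↦ ∑ t ∈ range n, d t ω) ℱ μ := by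
  refine martingale_of_condExp_sub_eq_zero_nat hd.stronglyMeasurable_sum
    (fun n ↦ integrable_finsetSum _ fun t _ ↦ hint t) fun n ↦ ?_
  have increment :
      (fun ω ↦ ∑ t ∈ range (n + 1), d t ω) - (fun ω ↦ ∑ t ∈ range n, d t ω) = d n := by
    ext ω
    simp [sum_range_succ]
  rw [increment]
  exact hd.condExp_eq_zero n

lemma integral_sum_mul_eq_zero [IsFiniteMeasure μ] (hd : IsMartingaleDifference d ℱ μ)
    (hL2 : ∀ t, MemLp (d t) 2 μ) (n : ℕ) :
    ∫ ω, (∑ t ∈ range n, d t ω) * d n ω ∂μ = 0 := by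
  have pull_out : μ[(fun ω ↦ ∑ t ∈ range n, d t ω) * d n | ℱ n] =ᵐ[μ]
      (fun ω ↦ ∑ t ∈ range n, d t ω) * μ[d n | ℱ n] :=
    condExp_mul_of_stronglyMeasurable_left (hd.stronglyMeasurable_sum n)
      ((memLp_finsetSum _ fun t _ ↦ hL2 t).integrable_mul (hL2 n))
      ((hL2 n).integrable one_le_two)
  calc ∫ ω, (∑ t ∈ range n, d t ω) * d n ω ∂μ
      = ∫ ω, (μ[(fun ω ↦ ∑ t ∈ range n, d t ω) * d n | ℱ n]) ω ∂μ :=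
        (integral_condExp (ℱ.le n)).symm
    _ = ∫ _, 0 ∂μ := by
        refine integral_congr_ae ?_
        filter_upwards [pull_out, hd.condExp_eq_zero n] with ω h_pull h_zero
        simp [h_pull, h_zero]
    _ = 0 := integral_zero _ _

lemma integral_sq_sum [IsFiniteMeasure μ] (hd : IsMartingaleDifference d ℱ μ)
    (hL2 : ∀ t, MemLp (d t) 2 μ) (n : ℕ) :
    ∫ ω, (∑ t ∈ range n, d t ω) ^ 2 ∂μ = ∑ t ∈ range n, ∫ ω, d t ω ^ 2 ∂μ := by
  induction n with
  | zero => simp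
  | succ n ih =>
    have hsum : MemLp (fun ω ↦ ∑ t ∈ range n, d t ω) 2 μ := memLp_finsetSum _ fun t _ ↦ hL2 t
    have hcross : Integrable (fun ω ↦ 2 * ((∑ t ∈ range n, d t ω) * d n ω)) μ :=
      (hsum.integrable_mul (hL2 n)).const_mul 2
    have hadd : Integrable
        (fun ω ↦ (∑ t ∈ range n, d t ω) ^ 2 + 2 * ((∑ t ∈ range n, d t ω) * d n ω)) μ :=
      hsum.integrable_sq.add hcross
    calc ∫ ω, (∑ t ∈ range (n + 1), d t ω) ^ 2 ∂μ
        = ∫ ω, (∑ t ∈ range n, d t ω) ^ 2 + 2 * ((∑ t ∈ range n, d t ω) * d n ω)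
            + d n ω ^ 2 ∂μ := by simp only [sum_range_succ, add_sq, mul_assoc]
      _ = ∑ t ∈ range (n + 1), ∫ ω, d t ω ^ 2 ∂μ := by
        rw [integral_add hadd (hL2 n).integrable_sq,
          integral_add hsum.integrable_sq hcross, integral_const_mul,
          hd.integral_sum_mul_eq_zero hL2, ih, sum_range_succ, mul_zero, add_zero]

theorem ae_exists_tendsto_sum [IsFiniteMeasure μ] (hd : IsMartingaleDifference d ℱ μ)
    (hL2 : ∀ t, MemLp (d t) 2 μ) (hsum : Summable fun t ↦ ∫ ω, d t ω ^ 2 ∂μ) :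
    ∀ᵐ ω ∂μ, ∃ L, Tendsto (fun n ↦ ∑ t ∈ range n, d t ω) atTop (𝓝 L) := by
  set S : ℕ → Ω → ℝ := fun n ω ↦ ∑ t ∈ range n, d t ω
  have hS (n : ℕ) : MemLp (S n) 2 μ := memLp_finsetSum _ fun t _ ↦ hL2 t
  have integral_abs_le (n : ℕ) :
      ∫ ω, |S n ω| ∂μ ≤ μ.real Set.univ + ∑' t, ∫ ω, d t ω ^ 2 ∂μ :=
    calc ∫ ω, |S n ω| ∂μ
        ≤ ∫ ω, 1 + S n ω ^ 2 ∂μ := by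
          refine integral_mono ((hS n).integrable one_le_two).abs
            ((integrable_const 1).add (hS n).integrable_sq) fun ω ↦ ?_
          nlinarith [sq_nonneg (|S n ω| - 1), sq_abs (S n ω), abs_nonneg (S n ω)]
      _ = μ.real Set.univ + ∑ t ∈ range n, ∫ ω, d t ω ^ 2 ∂μ := by
          rw [integral_add (integrable_const 1) (hS n).integrable_sq, hd.integral_sq_sum hL2]
          simp
      _ ≤ μ.real Set.univ + ∑' t, ∫ ω, d t ω ^ 2 ∂μ := by
          gcongr
          exact hsum.sum_le_tsum _ fun t _ ↦ integral_nonneg fun ω ↦ sq_nonneg _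
  refine (hd.martingale_sum fun t ↦ (hL2 t).integrable one_le_two).submartingale
    |>.exists_ae_tendsto_of_bdd
    (R := (μ.real Set.univ + ∑' t, ∫ ω, d t ω ^ 2 ∂μ).toNNReal) fun n ↦ ?_
  rw [eLpNorm_one_eq_lintegral_enorm,
    ← ofReal_integral_norm_eq_lintegral_enorm ((hS n).integrable one_le_two)]
  exact ENNReal.ofReal_le_ofReal (integral_abs_le n)

theorem ae_isLittleO_sum [IsFiniteMeasure μ] (hd : IsMartingaleDifference d ℱ μ) {C : ℝ}
    (hC : ∀ t ω, |d t ω| ≤ C) {b : ℕ → ℝ} (hb : Monotone b) (hb₀ : ∀ n, b n ≠ 0)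
    (hb_top : Tendsto b atTop atTop) (hb_sq : Summable fun t ↦ (b t ^ 2)⁻¹) :
    ∀ᵐ ω ∂μ, (fun n ↦ ∑ t ∈ range n, d t ω) =o[atTop] b := by
  have hL2 (t : ℕ) : MemLp (fun ω ↦ (b t)⁻¹ * d t ω) 2 μ :=
    (MemLp.of_bound ((hd.stronglyMeasurable t).mono (ℱ.le _)).aestronglyMeasurable C
      (.of_forall (hC t))).const_mul _
  have integral_sq_le (t : ℕ) :
      ∫ ω, ((b t)⁻¹ * d t ω) ^ 2 ∂μ ≤ μ.real Set.univ * C ^ 2 * (b t ^ 2)⁻¹ :=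
    calc ∫ ω, ((b t)⁻¹ * d t ω) ^ 2 ∂μ ≤ ∫ _, C ^ 2 * (b t ^ 2)⁻¹ ∂μ := by
          refine integral_mono (hL2 t).integrable_sq (integrable_const _) fun ω ↦ ?_
          simp only [mul_pow, inv_pow, mul_comm (C ^ 2)]
          exact mul_le_mul_of_nonneg_left (sq_le_sq.2 ((hC t ω).trans (le_abs_self C)))
            (by positivity)
      _ = μ.real Set.univ * C ^ 2 * (b t ^ 2)⁻¹ := by
          rw [integral_const, smul_eq_mul, mul_assoc]
  have summable_integral_sq : Summable fun t ↦ ∫ ω, ((b t)⁻¹ * d t ω) ^ 2 ∂μ :=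
    (hb_sq.mul_left _).of_nonneg_of_le (fun t ↦ integral_nonneg fun ω ↦ sq_nonneg _)
      integral_sq_le
  filter_upwards [(hd.const_mul fun t ↦ (b t)⁻¹).ae_exists_tendsto_sum hL2 summable_integral_sq]
    with ω ⟨L, hL⟩
  refine isLittleO_sum_of_tendsto_sum_div hb hb₀ hb_top (L := L) ?_
  simpa only [div_eq_inv_mul] using hL

theorem ae_isLittleO_sum_rpow [IsFiniteMeasure μ] (hd : IsMartingaleDifference d ℱ μ) {C : ℝ}
    (hC : ∀ t ω, |d t ω| ≤ C) {r : ℝ} (hr : 1 / 2 < r) :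
    ∀ᵐ ω ∂μ, (fun n ↦ ∑ t ∈ range n, d t ω) =o[atTop] fun n : ℕ ↦ (n : ℝ) ^ r := by
  have hr₀ : 0 < r := by linarith
  have rpow_top : Tendsto (fun n : ℕ ↦ ((n + 1 : ℕ) : ℝ) ^ r) atTop atTop :=
    (tendsto_rpow_atTop hr₀).comp (tendsto_natCast_atTop_atTop.comp (tendsto_add_atTop_nat 1))
  have summable_inv_sq : Summable fun n : ℕ ↦ ((((n + 1 : ℕ) : ℝ) ^ r) ^ 2)⁻¹ := by
    refine ((summable_nat_add_iff 1).2
      (Real.summable_nat_rpow_inv.2 (show 1 < r * 2 by linarith))).congr fun n ↦ ?_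
    rw [← Real.rpow_mul_natCast (by positivity), Nat.cast_ofNat]
  filter_upwards [hd.ae_isLittleO_sum hC (fun i j hij ↦ by gcongr) (fun n ↦ by positivity)
    rpow_top summable_inv_sq] with ω hω
  exact hω.trans_isBigO (isBigO_natCast_succ.rpow hr₀.le (.of_forall fun n ↦ by positivity))

end IsMartingaleDifference

theorem exists_sub_apply_eq_of_fixed_le_span {K E : Type*} [Field K] [AddCommGroup E] [Module K E]
    [FiniteDimensional K E] {T : E →ₗ[K] E} {φ : E →ₗ[K] K} {e : E} (hφT : ∀ x, φ (T x) = φ x)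
    (hφe : φ e = 1) (hfixed : ∀ x, T x = x → ∃ c : K, x = c • e) {y : E} (hy : φ y = 0) :
    ∃ x, x - T x = y := by
  let R : E →ₗ[K] E := LinearMap.id - T + φ.smulRight e
  have R_apply (x : E) : R x = x - T x + φ x • e := rfl
  have φ_R (x : E) : φ (R x) = φ x := by simp [R_apply, hφT, hφe]
  have R_injective : Function.Injective R := by
    refine (injective_iff_map_eq_zero R).2 fun x hx ↦ ?_
    have hφx : φ x = 0 := by rw [← φ_R, hx, map_zero]
    have hTx : x - T x = 0 := by simpa [R_apply, hφx] using hx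
    obtain ⟨c, rfl⟩ := hfixed x (sub_eq_zero.1 hTx).symm
    have hc : c = 0 := by simpa [hφe] using hφx
    rw [hc, zero_smul]
  obtain ⟨x, hx⟩ := LinearMap.injective_iff_surjective.1 R_injective y
  have hφx : φ x = 0 := by rw [← φ_R, hx, hy]
  exact ⟨x, by simpa [R_apply, hφx] using hx⟩

section Window

variable {A : Type*}

/-- The block of `L` consecutive letters of the sequence `u` starting at position `t`. -/
def window (u : ℕ → A) (L t : ℕ) : Fin L → A := fun i ↦ u (t + i)

lemma init_window (u : ℕ → A) (L t : ℕ) : Fin.init (window u (L + 1) t) = window u L t := rfl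

lemma tail_window (u : ℕ → A) (L t : ℕ) : Fin.tail (window u (L + 1) t) = window u L (t + 1) := by
  funext i
  simp [Fin.tail, window, add_assoc, add_comm 1]

lemma snoc_window (u : ℕ → A) (L t : ℕ) :
    Fin.snoc (window u L t) (u (t + L)) = window u (L + 1) t :=
  Fin.snoc_init_self (window u (L + 1) t)

lemma window_succ_eq_snoc_of_window_zero_eq {u : ℕ → A} {t L : ℕ} {p : Fin (t + L) → A}
    (hp : window u (t + L) 0 = p) :
    window u (L + 1) t = Fin.snoc (fun i ↦ p (Fin.natAdd t i)) (u (t + L)) := by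
  rw [← snoc_window, ← hp]
  congr 1
  funext i
  simp [window]

lemma exists_window_zero_eq_window_self_eq [Nonempty A] {k : ℕ} (v w : Fin k → A) :
    ∃ u : ℕ → A, window u k 0 = v ∧ window u k k = w := by
  refine ⟨fun t ↦ if h : t < k + k then Fin.append v w ⟨t, h⟩ else Classical.arbitrary A, ?_, ?_⟩
  · funext i
    have hi : (i : ℕ) < k + k := by omega
    simp only [window, zero_add, dif_pos hi]
    exact Fin.append_left v w i
  · funext i
    simp only [window, dif_pos (Nat.add_lt_add_left i.is_lt k)]
    exact Fin.append_right v w i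

end Window

section TransitionOperator

variable {A : Type*} [Fintype A] {k : ℕ} {Q : (Fin k → A) → A → ℝ}

/-- The averaging operator of a transition kernel `Q` of order `k`: `transMean Q f w` is the mean
of `f` over the one-letter extensions of `w`, weighted by `Q w`. -/
noncomputable def transMean (Q : (Fin k → A) → A → ℝ) :
    ((Fin (k + 1) → A) → ℝ) →ₗ[ℝ] ((Fin k → A) → ℝ) where
  toFun f w := ∑ s, Q w s * f (Fin.snoc w s)
  map_add' f g := by ext w; simp [mul_add, sum_add_distrib]
  map_smul' c f := by ext w; simp [mul_sum, mul_left_comm]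

lemma transMean_apply (f : (Fin (k + 1) → A) → ℝ) (w : Fin k → A) :
    transMean Q f w = ∑ s, Q w s * f (Fin.snoc w s) := rfl

lemma transMean_comp_init (hQ : ∀ w, ∑ s, Q w s = 1) (h : (Fin k → A) → ℝ) :
    transMean Q (h ∘ Fin.init) = h := by
  ext w
  simp [transMean_apply, ← sum_mul, hQ]

lemma apply_tail_snoc_eq_of_isMax (hQ : ∀ w, ∑ s, Q w s = 1) (hpos : ∀ w s, 0 < Q w s)
    {h : (Fin k → A) → ℝ} (hh : transMean Q (h ∘ Fin.tail) = h) {v : Fin k → A}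
    (hv : ∀ w, h w ≤ h v) (s : A) : h (Fin.tail (Fin.snoc v s : Fin (k + 1) → A)) = h v := by
  let next (s : A) : Fin k → A := Fin.tail (Fin.snoc v s : Fin (k + 1) → A)
  have deficit_nonneg (s : A) : 0 ≤ Q v s * (h v - h (next s)) :=
    mul_nonneg (hpos v s).le (sub_nonneg.2 (hv _))
  have sum_deficit : ∑ s, Q v s * (h v - h (next s)) = 0 := by
    have hv_mean : ∑ s, Q v s * h (next s) = h v := congrFun hh v
    simp only [mul_sub, sum_sub_distrib, ← sum_mul, hQ, hv_mean, one_mul, sub_self]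
  have deficit_zero := (sum_eq_zero_iff_of_nonneg fun s _ ↦ deficit_nonneg s).1 sum_deficit s
    (mem_univ s)
  exact (sub_eq_zero.1 ((mul_eq_zero.1 deficit_zero).resolve_left (hpos v s).ne')).symm

theorem eq_of_transMean_comp_tail_eq_self [Nonempty A] (hQ : ∀ w, ∑ s, Q w s = 1)
    (hpos : ∀ w s, 0 < Q w s) {h : (Fin k → A) → ℝ} (hh : transMean Q (h ∘ Fin.tail) = h)
    (v w : Fin k → A) : h v = h w := by
  obtain ⟨v₀, hv₀⟩ := Finite.exists_max h
  suffices eq_max : ∀ w, h w = h v₀ from (eq_max v).trans (eq_max w).symm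
  intro w
  obtain ⟨u, hu_zero, hu_k⟩ := exists_window_zero_eq_window_self_eq v₀ w
  have along_path (t : ℕ) : h (window u k t) = h v₀ := by
    induction t with
    | zero => rw [hu_zero]
    | succ t ih =>
      rw [← tail_window, ← snoc_window, ← ih]
      exact apply_tail_snoc_eq_of_isMax hQ hpos hh (fun w ↦ (hv₀ w).trans_eq ih.symm) _
  rw [← hu_k, along_path]

theorem exists_poisson_solution [Nonempty A] (hQ : ∀ w, ∑ s, Q w s = 1)
    (hpos : ∀ w s, 0 < Q w s) {φ : ((Fin k → A) → ℝ) →ₗ[ℝ] ℝ} (hφ_one : φ 1 = 1)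
    (hφ : ∀ h, φ (transMean Q (h ∘ Fin.tail)) = φ h) {y : (Fin k → A) → ℝ} (hy : φ y = 0) :
    ∃ h, h - transMean Q (h ∘ Fin.tail) = y := by
  refine exists_sub_apply_eq_of_fixed_le_span (e := 1)
    (T := transMean Q ∘ₗ LinearMap.funLeft ℝ ℝ Fin.tail) hφ hφ_one (fun h hh ↦ ?_) hy
  obtain ⟨v⟩ : Nonempty (Fin k → A) := inferInstance
  refine ⟨h v, funext fun w ↦ ?_⟩
  simpa using eq_of_transMean_comp_tail_eq_self hQ hpos hh w v

end TransitionOperator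

section FiniteValued

variable {Ω B : Type*} {m : MeasurableSpace Ω} {μ : Measure Ω} [IsFiniteMeasure μ]
  [MeasurableSpace B] [MeasurableSingletonClass B] {V : Ω → B}

lemma integrable_comp_of_finite [Finite B] (hV : Measurable V) (f : B → ℝ) :
    Integrable (fun ω ↦ f (V ω)) μ :=
  (Integrable.of_finite (μ := μ.map V) (f := f)).comp_measurable hV

lemma integral_comp_eq_sum [Fintype B] (hV : Measurable V) (f : B → ℝ) :
    ∫ ω, f (V ω) ∂μ = ∑ b, μ.real (V ⁻¹' {b}) * f b := by
  have hf : Measurable f := measurable_of_finite f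
  rw [← integral_map hV.aemeasurable hf.aestronglyMeasurable, integral_fintype .of_finite]
  refine sum_congr rfl fun b _ ↦ ?_
  rw [map_measureReal_apply hV (measurableSet_singleton b), smul_eq_mul]

lemma condExp_comap_ae_eq_zero [Finite B] (hV : Measurable V) {f : Ω → ℝ} (hf : Integrable f μ)
    (hf_zero : ∀ b, ∫ ω in V ⁻¹' {b}, f ω ∂μ = 0) :
    μ[f | MeasurableSpace.comap V inferInstance] =ᵐ[μ] 0 := by
  refine (ae_eq_condExp_of_forall_setIntegral_eq hV.comap_le hf (fun s _ _ ↦ integrableOn_zero)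
    ?_ aestronglyMeasurable_zero).symm
  rintro _ ⟨T, -, rfl⟩ -
  have preimage_eq : V ⁻¹' T = ⋃ b ∈ T.toFinite.toFinset, V ⁻¹' {b} := by ext ω; simp
  have pairwise_disjoint :
      (T.toFinite.toFinset : Set B).Pairwise (Function.onFun Disjoint (V ⁻¹' {·})) :=
    fun b _ b' _ hne ↦ (Set.disjoint_singleton.2 hne).preimage V
  rw [preimage_eq, integral_biUnion_finset _ (fun b _ ↦ hV (measurableSet_singleton b))
    pairwise_disjoint fun b _ ↦ hf.integrableOn]
  simp [hf_zero]

end FiniteValued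

section StationaryMarkov

variable {Ω A : Type*} {m : MeasurableSpace Ω} {μ : Measure Ω} [MeasurableSpace A]
  {U : Ω → ℕ → A} {k : ℕ} {Q : (Fin k → A) → A → ℝ}

/-- The random sequence `U` is stationary: the law of its windows does not depend on their
position. -/
def IsStationary (μ : Measure Ω) (U : Ω → ℕ → A) : Prop :=
  ∀ L t, μ.map (fun ω ↦ window (U ω) L t) = μ.map (fun ω ↦ window (U ω) L 0)

/-- The random sequence `U` is Markov of order `k` with transition kernel `Q`. Conditional
probabilities are cleared of denominators, so that impossible pasts `p` impose no condition. -/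
def IsMarkov (μ : Measure Ω) (U : Ω → ℕ → A) (Q : (Fin k → A) → A → ℝ) : Prop :=
  ∀ (t : ℕ) (p : Fin (t + k) → A) (s : A),
    μ.real {ω | window (U ω) (t + k) 0 = p ∧ U ω (t + k) = s} =
      Q (fun i ↦ p (Fin.natAdd t i)) s * μ.real {ω | window (U ω) (t + k) 0 = p}

lemma measurable_window (hU : Measurable U) (L t : ℕ) :
    Measurable fun ω ↦ window (U ω) L t :=
  measurable_pi_lambda _ fun i ↦ (measurable_pi_apply (t + i)).comp hU

lemma measurable_comap_window (U : Ω → ℕ → A) {L t N : ℕ} (h : t + L ≤ N) :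
    Measurable[MeasurableSpace.comap (fun ω ↦ window (U ω) N 0) inferInstance]
      fun ω ↦ window (U ω) L t := by
  have factor : (fun ω ↦ window (U ω) L t) =
      (fun v (i : Fin L) ↦ v ⟨t + i, by omega⟩) ∘ fun ω ↦ window (U ω) N 0 := by
    funext ω i
    simp [window]
  rw [factor]
  exact (measurable_pi_lambda _ fun i ↦ measurable_pi_apply _).comp (comap_measurable _)

/-- The filtration generated by the letters of `U`, indexed so that stage `n` has seen the first
`n + k` letters, which is what the transition from time `n + k` depends on. -/
def pastFiltration (hU : Measurable U) (k : ℕ) : Filtration ℕ m where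
  seq n := MeasurableSpace.comap (fun ω ↦ window (U ω) (n + k) 0) inferInstance
  mono' _ _ h := (measurable_comap_window U (by omega)).comap_le
  le' n := (measurable_window hU (n + k) 0).comap_le

lemma IsStationary.integral_window (hU : Measurable U) (hstat : IsStationary μ U) {L : ℕ}
    {f : (Fin L → A) → ℝ} (hf : Measurable f) (t : ℕ) :
    ∫ ω, f (window (U ω) L t) ∂μ = ∫ ω, f (window (U ω) L 0) ∂μ := by
  rw [← integral_map (measurable_window hU L t).aemeasurable hf.aestronglyMeasurable, hstat L t,
    integral_map (measurable_window hU L 0).aemeasurable hf.aestronglyMeasurable]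

variable [Fintype A] [MeasurableSingletonClass A]

lemma IsMarkov.setIntegral_window_succ [IsFiniteMeasure μ] (hU : Measurable U)
    (hmarkov : IsMarkov μ U Q) (f : (Fin (k + 1) → A) → ℝ) (t : ℕ) (p : Fin (t + k) → A) :
    ∫ ω in {ω | window (U ω) (t + k) 0 = p}, f (window (U ω) (k + 1) t) ∂μ =
      transMean Q f (fun i ↦ p (Fin.natAdd t i)) * μ.real {ω | window (U ω) (t + k) 0 = p} := by
  have hpast : MeasurableSet {ω | window (U ω) (t + k) 0 = p} :=
    measurable_window hU _ _ (measurableSet_singleton p)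
  have hletter : Measurable fun ω ↦ U ω (t + k) := (measurable_pi_apply _).comp hU
  rw [setIntegral_congr_fun hpast fun ω (hω : window (U ω) (t + k) 0 = p) ↦
      congrArg f (window_succ_eq_snoc_of_window_zero_eq hω),
    integral_comp_eq_sum hletter fun s ↦ f (Fin.snoc (fun i ↦ p (Fin.natAdd t i)) s),
    transMean_apply, sum_mul]
  refine sum_congr rfl fun s _ ↦ ?_
  rw [measureReal_restrict_apply (hletter (measurableSet_singleton s)), mul_right_comm,
    ← hmarkov t p s, Set.inter_comm]
  rfl

theorem IsMarkov.isMartingaleDifference [IsFiniteMeasure μ] (hU : Measurable U)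
    (hmarkov : IsMarkov μ U Q) {f : (Fin (k + 1) → A) → ℝ} (hf : transMean Q f = 0) :
    IsMartingaleDifference (fun t ω ↦ f (window (U ω) (k + 1) t)) (pastFiltration hU k) μ where
  stronglyMeasurable t :=
    ((measurable_of_finite f).comp (measurable_comap_window U (by omega))).stronglyMeasurable
  condExp_eq_zero t := by
    refine condExp_comap_ae_eq_zero (measurable_window hU (t + k) 0)
      (integrable_comp_of_finite (measurable_window hU (k + 1) t) f) fun p ↦ ?_
    exact (hmarkov.setIntegral_window_succ hU f t p).trans (by simp [hf])

lemma IsMarkov.integral_window_succ [IsFiniteMeasure μ] (hU : Measurable U)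
    (hmarkov : IsMarkov μ U Q) (hQ : ∀ w, ∑ s, Q w s = 1) (f : (Fin (k + 1) → A) → ℝ) (t : ℕ) :
    ∫ ω, f (window (U ω) (k + 1) t) ∂μ = ∫ ω, transMean Q f (window (U ω) k t) ∂μ := by
  have centered : transMean Q (f - transMean Q f ∘ Fin.init) = 0 := by
    rw [map_sub, transMean_comp_init hQ, sub_self]
  have hdiff := hmarkov.isMartingaleDifference hU centered
  rw [← sub_eq_zero, ← integral_sub (integrable_comp_of_finite (measurable_window hU _ _) f)
    (integrable_comp_of_finite (measurable_window hU _ _) (transMean Q f))]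
  exact (integral_condExp ((pastFiltration hU k).le t)).symm.trans
    ((integral_congr_ae (hdiff.condExp_eq_zero t)).trans (integral_zero _ _))

theorem exists_transMean_sub_coboundary_eq_zero [IsProbabilityMeasure μ] [Nonempty A]
    (hU : Measurable U) (hmarkov : IsMarkov μ U Q) (hstat : IsStationary μ U)
    (hQ : ∀ w, ∑ s, Q w s = 1) (hpos : ∀ w s, 0 < Q w s) (f : (Fin (k + 1) → A) → ℝ) :
    ∃ h : (Fin k → A) → ℝ, transMean Q (fun v ↦
      f v - ∫ ω, f (window (U ω) (k + 1) 0) ∂μ - (h (Fin.init v) - h (Fin.tail v))) = 0 := by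
  set c := ∫ ω, f (window (U ω) (k + 1) 0) ∂μ with hc
  have hint (h : (Fin k → A) → ℝ) : Integrable (fun ω ↦ h (window (U ω) k 0)) μ :=
    integrable_comp_of_finite (measurable_window hU k 0) h
  let φ : ((Fin k → A) → ℝ) →ₗ[ℝ] ℝ :=
    { toFun h := ∫ ω, h (window (U ω) k 0) ∂μ
      map_add' h h' := integral_add (hint h) (hint h')
      map_smul' a h := integral_const_mul a _ }
  have φ_one : φ 1 = 1 := by simp [φ]
  have φ_transMean (f : (Fin (k + 1) → A) → ℝ) :
      φ (transMean Q f) = ∫ ω, f (window (U ω) (k + 1) 0) ∂μ :=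
    (hmarkov.integral_window_succ hU hQ f 0).symm
  have φ_invariant (h : (Fin k → A) → ℝ) : φ (transMean Q (h ∘ Fin.tail)) = φ h := by
    rw [φ_transMean]
    simp only [Function.comp_apply, tail_window]
    exact hstat.integral_window hU (measurable_of_finite h) 1
  obtain ⟨h, hh⟩ := exists_poisson_solution hQ hpos φ_one φ_invariant
    (y := transMean Q f - c • 1) (by rw [map_sub, φ_transMean, map_smul, φ_one, hc]; simp)
  refine ⟨h, ?_⟩
  have decompose : (fun v ↦ f v - c - (h (Fin.init v) - h (Fin.tail v))) =
      f - (c • 1 : (Fin k → A) → ℝ) ∘ Fin.init - (h ∘ Fin.init - h ∘ Fin.tail) := by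
    funext v
    simp
  rw [decompose, map_sub, map_sub, map_sub, transMean_comp_init hQ, transMean_comp_init hQ, hh,
    sub_self]

theorem ae_isLittleO_sum_window_sub_integral [IsProbabilityMeasure μ] [Nonempty A]
    (hU : Measurable U) (hmarkov : IsMarkov μ U Q) (hstat : IsStationary μ U)
    (hQ : ∀ w, ∑ s, Q w s = 1) (hpos : ∀ w s, 0 < Q w s) (f : (Fin (k + 1) → A) → ℝ)
    {r : ℝ} (hr : 1 / 2 < r) :
    ∀ᵐ ω ∂μ, (fun n ↦ ∑ t ∈ range n,
      (f (window (U ω) (k + 1) t) - ∫ ω', f (window (U ω') (k + 1) 0) ∂μ)) =o[atTop]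
        fun n : ℕ ↦ (n : ℝ) ^ r := by
  set c := ∫ ω', f (window (U ω') (k + 1) 0) ∂μ
  obtain ⟨h, hh⟩ := exists_transMean_sub_coboundary_eq_zero hU hmarkov hstat hQ hpos f
  set D : (Fin (k + 1) → A) → ℝ := fun v ↦ f v - c - (h (Fin.init v) - h (Fin.tail v)) with hD
  have D_bounded (t : ℕ) (ω : Ω) : |D (window (U ω) (k + 1) t)| ≤ ∑ v, |D v| :=
    single_le_sum (f := fun v ↦ |D v|) (fun v _ ↦ abs_nonneg _) (mem_univ _)
  filter_upwards [(hmarkov.isMartingaleDifference hU hh).ae_isLittleO_sum_rpow D_bounded hr]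
    with ω hω
  have telescope (n : ℕ) : ∑ t ∈ range n, (f (window (U ω) (k + 1) t) - c) =
      ∑ t ∈ range n, D (window (U ω) (k + 1) t) +
        (h (window (U ω) k 0) - h (window (U ω) k n)) := by
    rw [← sum_range_sub' fun t ↦ h (window (U ω) k t), ← sum_add_distrib]
    simp only [hD, init_window, tail_window, sub_add_cancel]
  have boundary : (fun n ↦ h (window (U ω) k 0) - h (window (U ω) k n)) =o[atTop]
      fun n : ℕ ↦ (n : ℝ) ^ r := by
    have bounded : (fun n ↦ h (window (U ω) k 0) - h (window (U ω) k n)) =O[atTop]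
        (1 : ℕ → ℝ) :=
      .of_bound (∑ v, |h (window (U ω) k 0) - h v|) <| .of_forall fun n ↦ by
        simpa using single_le_sum (f := fun v ↦ |h (window (U ω) k 0) - h v|)
          (fun v _ ↦ abs_nonneg _) (mem_univ (window (U ω) k n))
    refine bounded.trans_isLittleO (isLittleO_const_left.2 (.inr ?_))
    exact tendsto_norm_atTop_atTop.comp
      ((tendsto_rpow_atTop (by linarith)).comp tendsto_natCast_atTop_atTop)
  simp only [telescope]
  exact hω.add boundary

end StationaryMarkov

section KullbackLeibler

variable {S : Type*} [Fintype S] {p q : S → ℝ}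

lemma sub_le_mul_log_div {a b : ℝ} (ha : 0 ≤ a) (hb : 0 ≤ b) (hab : b = 0 → a = 0) :
    a - b ≤ a * Real.log (a / b) := by
  rcases ha.eq_or_lt with rfl | ha
  · simpa using hb
  have hb : 0 < b := hb.lt_of_ne' fun hb₀ ↦ ha.ne' (hab hb₀)
  calc a - b = a * (1 - (a / b)⁻¹) := by field_simp
    _ ≤ a * Real.log (a / b) := by
        gcongr
        exact Real.one_sub_inv_le_log_of_pos (by positivity)

lemma mul_log_div_le {a b : ℝ} (ha : 0 ≤ a) (hb : 0 ≤ b) (hab : b = 0 → a = 0) :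
    a * Real.log (a / b) ≤ (a - b) ^ 2 / b + (a - b) := by
  rcases ha.eq_or_lt with rfl | ha
  · rcases hb.eq_or_lt with rfl | hb
    · simp
    · field_simp
      simp
  have hb : 0 < b := hb.lt_of_ne' fun hb₀ ↦ ha.ne' (hab hb₀)
  calc a * Real.log (a / b) ≤ a * (a / b - 1) := by
        gcongr
        exact Real.log_le_sub_one_of_pos (by positivity)
    _ = (a - b) ^ 2 / b + (a - b) := by field_simp; ring

lemma KLfin_nonneg (hp : ∀ x, 0 ≤ p x) (hq : ∀ x, 0 ≤ q x) (hpq : ∀ x, q x = 0 → p x = 0)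
    (hsum : ∑ x, p x = ∑ x, q x) : 0 ≤ KLfin p q :=
  calc 0 = ∑ x, (p x - q x) := by rw [sum_sub_distrib, hsum, sub_self]
    _ ≤ KLfin p q := sum_le_sum fun x _ ↦ sub_le_mul_log_div (hp x) (hq x) (hpq x)

lemma KLfin_le_sum_sq_div (hp : ∀ x, 0 ≤ p x) (hq : ∀ x, 0 ≤ q x) (hpq : ∀ x, q x = 0 → p x = 0)
    (hsum : ∑ x, p x = ∑ x, q x) : KLfin p q ≤ ∑ x, (p x - q x) ^ 2 / q x :=
  calc KLfin p q ≤ ∑ x, ((p x - q x) ^ 2 / q x + (p x - q x)) :=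
        sum_le_sum fun x _ ↦ mul_log_div_le (hp x) (hq x) (hpq x)
    _ = ∑ x, (p x - q x) ^ 2 / q x := by
        rw [sum_add_distrib, sum_sub_distrib, hsum, sub_self, add_zero]

theorem tendsto_mul_KLfin_of_tendsto_mul_sq {ι : Type*} {l : Filter ι} {a : ι → ℝ}
    {p : ι → S → ℝ} (ha : ∀ n, 0 ≤ a n) (hp : ∀ n x, 0 ≤ p n x) (hq : ∀ x, 0 ≤ q x)
    (hpq : ∀ n x, q x = 0 → p n x = 0) (hsum : ∀ᶠ n in l, ∑ x, p n x = ∑ x, q x)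
    (h : ∀ x, Tendsto (fun n ↦ a n * (p n x - q x) ^ 2) l (𝓝 0)) :
    Tendsto (fun n ↦ a n * KLfin (p n) q) l (𝓝 0) := by
  have chi_sq : Tendsto (fun n ↦ ∑ x, a n * (p n x - q x) ^ 2 / q x) l (𝓝 0) := by
    simpa using tendsto_finsetSum univ fun x _ ↦ (h x).div_const (q x)
  refine squeeze_zero' ?_ ?_ chi_sq
  · filter_upwards [hsum] with n hn
    exact mul_nonneg (ha n) (KLfin_nonneg (hp n) hq (hpq n) hn)
  · filter_upwards [hsum] with n hn
    simp only [mul_div_assoc, ← mul_sum]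
    exact mul_le_mul_of_nonneg_left (KLfin_le_sum_sq_div (hp n) hq (hpq n) hn) (ha n)

end KullbackLeibler

section EmpiricalFrequency

variable {S : Type*} [DecidableEq S]

/-- The proportion of the first `n` terms of the sequence `v` that equal `x`. It is `0` for
`n = 0`, by `x / 0 = 0`. -/
noncomputable def empFreq (v : ℕ → S) (n : ℕ) (x : S) : ℝ := (#{t ∈ range n | v t = x} : ℝ) / n

lemma empFreq_nonneg (v : ℕ → S) (n : ℕ) (x : S) : 0 ≤ empFreq v n x := by
  unfold empFreq
  positivity

lemma sum_empFreq [Fintype S] (v : ℕ → S) {n : ℕ} (hn : n ≠ 0) : ∑ x, empFreq v n x = 1 := by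
  have hcard : ∑ x, #{t ∈ range n | v t = x} = n := by
    rw [← card_eq_sum_card_fiberwise fun t _ ↦ mem_coe.2 (mem_univ (v t)), card_range]
  simp only [empFreq]
  rw [← sum_div, ← Nat.cast_sum, hcard, div_self (Nat.cast_ne_zero.2 hn)]

lemma empFreq_eq_zero_of_forall_ne {v : ℕ → S} {x : S} (h : ∀ t, v t ≠ x) (n : ℕ) :
    empFreq v n x = 0 := by
  simp [empFreq, h]

lemma sum_sub_eq_mul_empFreq_sub (v : ℕ → S) (x : S) (c : ℝ) {n : ℕ} (hn : n ≠ 0) :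
    ∑ t ∈ range n, ((if v t = x then 1 else 0) - c) = n * (empFreq v n x - c) := by
  have hn' : (n : ℝ) ≠ 0 := Nat.cast_ne_zero.2 hn
  rw [sum_sub_distrib, sum_boole, sum_const, card_range, nsmul_eq_mul, empFreq, mul_sub,
    mul_div_cancel₀ _ hn']

lemma tendsto_rpow_mul_sq_empFreq_sub {v : ℕ → S} {x : S} {c s : ℝ}
    (h : (fun n ↦ ∑ t ∈ range n, ((if v t = x then 1 else 0) - c)) =o[atTop]
      fun n : ℕ ↦ (n : ℝ) ^ (1 - s / 2)) :
    Tendsto (fun n : ℕ ↦ (n : ℝ) ^ s * (empFreq v n x - c) ^ 2) atTop (𝓝 0) := by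
  have quotient_sq := h.tendsto_div_nhds_zero.pow 2
  rw [zero_pow two_ne_zero] at quotient_sq
  refine quotient_sq.congr' ?_
  filter_upwards [eventually_ne_atTop 0] with n hn
  have hn_pos : 0 < (n : ℝ) := Nat.cast_pos.2 (Nat.pos_of_ne_zero hn)
  have rpow_sq : ((n : ℝ) ^ (1 - s / 2)) ^ 2 * (n : ℝ) ^ s = (n : ℝ) ^ 2 := by
    rw [← Real.rpow_mul_natCast hn_pos.le, ← Real.rpow_add hn_pos, ← Real.rpow_natCast]
    congr 1
    push_cast
    ring
  rw [sum_sub_eq_mul_empFreq_sub v x c hn, div_pow, mul_pow, ← rpow_sq]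
  field_simp

end EmpiricalFrequency

section StationaryMarkov

variable {Ω A S : Type*} {m : MeasurableSpace Ω} {μ : Measure Ω}
  [MeasurableSpace A] {U : Ω → ℕ → A}

lemma IsStationary.ae_forall_window_notMem (hU : Measurable U) (hstat : IsStationary μ U) {L : ℕ}
    {T : Set (Fin L → A)} (hT : MeasurableSet T) (hT_zero : μ {ω | window (U ω) L 0 ∈ T} = 0) :
    ∀ᵐ ω ∂μ, ∀ t, window (U ω) L t ∉ T := by
  refine ae_all_iff.2 fun t ↦ measure_eq_zero_iff_ae_notMem.1 ?_
  calc μ {ω | window (U ω) L t ∈ T} = μ.map (fun ω ↦ window (U ω) L t) T :=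
        (Measure.map_apply (measurable_window hU L t) hT).symm
    _ = μ.map (fun ω ↦ window (U ω) L 0) T := by rw [hstat L t]
    _ = 0 := (Measure.map_apply (measurable_window hU L 0) hT).trans hT_zero

variable [Fintype A] [MeasurableSingletonClass A] [DecidableEq S] [IsProbabilityMeasure μ]
  {k : ℕ} {Q : (Fin k → A) → A → ℝ}

theorem ae_tendsto_rpow_mul_sq_empFreq_window_sub (hU : Measurable U) (hmarkov : IsMarkov μ U Q)
    (hstat : IsStationary μ U) (hQ : ∀ w, ∑ s, Q w s = 1) (hpos : ∀ w s, 0 < Q w s)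
    (g : (Fin (k + 1) → A) → S) (x : S) {s : ℝ} (hs : s < 1) :
    ∀ᵐ ω ∂μ, Tendsto (fun n : ℕ ↦ (n : ℝ) ^ s *
        (empFreq (fun t ↦ g (window (U ω) (k + 1) t)) n x -
          μ.real {ω' | g (window (U ω') (k + 1) 0) = x}) ^ 2)
      atTop (𝓝 0) := by
  have hA : Nonempty A := (nonempty_of_isProbabilityMeasure μ).map fun ω ↦ U ω 0
  have hx : MeasurableSet {ω | g (window (U ω) (k + 1) 0) = x} :=
    measurable_window hU (k + 1) 0 (Set.toFinite (g ⁻¹' {x})).measurableSet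
  have mean_eq : ∫ ω, (if g (window (U ω) (k + 1) 0) = x then (1 : ℝ) else 0) ∂μ =
      μ.real {ω | g (window (U ω) (k + 1) 0) = x} := by
    simpa [Set.indicator_apply] using integral_indicator_one (μ := μ) hx
  filter_upwards [ae_isLittleO_sum_window_sub_integral hU hmarkov hstat hQ hpos
    (fun v ↦ if g v = x then 1 else 0) (show 1 / 2 < 1 - s / 2 by linarith)] with ω hω
  rw [mean_eq] at hω
  exact tendsto_rpow_mul_sq_empFreq_sub hω

theorem ae_tendsto_rpow_mul_KLfin_empFreq_window [Fintype S] (hU : Measurable U)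
    (hmarkov : IsMarkov μ U Q) (hstat : IsStationary μ U) (hQ : ∀ w, ∑ s, Q w s = 1)
    (hpos : ∀ w s, 0 < Q w s) (g : (Fin (k + 1) → A) → S) {s : ℝ} (hs : s < 1) :
    ∀ᵐ ω ∂μ, Tendsto (fun n : ℕ ↦ (n : ℝ) ^ s *
        KLfin (empFreq (fun t ↦ g (window (U ω) (k + 1) t)) n)
          (fun x ↦ μ.real {ω' | g (window (U ω') (k + 1) 0) = x}))
      atTop (𝓝 0) := by
  set q : S → ℝ := fun x ↦ μ.real {ω' | g (window (U ω') (k + 1) 0) = x}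
  have hg (x : S) : MeasurableSet (g ⁻¹' {x}) := (Set.toFinite _).measurableSet
  have sum_q : ∑ x, q x = 1 :=
    (sum_measureReal_preimage_singleton (f := fun ω ↦ g (window (U ω) (k + 1) 0)) univ fun x _ ↦
      measurable_window hU (k + 1) 0 (hg x)).trans (by simp)
  have sq_deviations := ae_all_iff.2 fun x ↦
    ae_tendsto_rpow_mul_sq_empFreq_window_sub hU hmarkov hstat hQ hpos g x hs
  have null_values : ∀ᵐ ω ∂μ, ∀ x, q x = 0 → ∀ t, g (window (U ω) (k + 1) t) ≠ x := by
    refine ae_all_iff.2 fun x ↦ ?_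
    by_cases hx : q x = 0
    · filter_upwards [hstat.ae_forall_window_notMem hU (hg x)
        ((measureReal_eq_zero_iff (measure_ne_top _ _)).1 hx)] with ω hω _ using hω
    · exact .of_forall fun ω h ↦ absurd h hx
  filter_upwards [sq_deviations, null_values] with ω hω hω_null
  refine tendsto_mul_KLfin_of_tendsto_mul_sq (fun n ↦ by positivity) (empFreq_nonneg _)
    (fun x ↦ measureReal_nonneg) (fun n x hx ↦ empFreq_eq_zero_of_forall_ne (hω_null x hx) n) ?_ hω
  filter_upwards [eventually_ne_atTop 0] with n hn
  rw [sum_empFreq _ hn, sum_q]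

end StationaryMarkov

section Pushforward

variable {S T : Type*} [Fintype S] [DecidableEq T]

lemma pushf_comp_symm {S' : Type*} [Fintype S'] (e : S ≃ S') (g : S' → T) (p : S → ℝ) :
    pushf g (fun w ↦ p (e.symm w)) = pushf (fun v ↦ g (e v)) p := by
  funext x
  simp only [pushf]
  exact (e.sum_comp _).symm.trans (by simp)

lemma pushf_empFreq [DecidableEq S] (g : S → T) (v : ℕ → S) (n : ℕ) :
    pushf g (empFreq v n) = empFreq (fun t ↦ g (v t)) n := by
  funext x
  have hcard : ∑ y with g y = x, #{t ∈ range n | v t = y} = #{t ∈ range n | g (v t) = x} := by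
    rw [card_eq_sum_card_fiberwise (s := {t ∈ range n | g (v t) = x}) (f := v)
      (t := {y | g y = x}) fun t ht ↦ by simpa using (mem_filter.1 ht).2]
    refine sum_congr rfl fun y hy ↦ ?_
    rw [filter_filter]
    congr 1
    ext t
    simp only [mem_filter, mem_univ, true_and] at hy ⊢
    grind
  simp only [pushf, empFreq]
  rw [← sum_filter, ← sum_div, ← Nat.cast_sum, hcard]

lemma pushf_measureReal {Ω : Type*} {m : MeasurableSpace Ω} {μ : Measure Ω} [IsFiniteMeasure μ]
    [MeasurableSpace S] [MeasurableSingletonClass S] {V : Ω → S} (hV : Measurable V) (g : S → T) :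
    pushf g (fun y ↦ μ.real {ω | V ω = y}) = fun x ↦ μ.real {ω | g (V ω) = x} := by
  funext x
  rw [pushf, ← sum_filter]
  refine (sum_measureReal_preimage_singleton _ fun y _ ↦ hV (measurableSet_singleton y)).trans ?_
  congr 1
  ext ω
  simp

end Pushforward

section JointProcess

variable {𝒳 Ω : Type*} {X Y Z : ℕ → Ω → 𝒳} {k : ℕ}

/-- The three processes as one random sequence of joint symbols. -/
def jointPath (X Y Z : ℕ → Ω → 𝒳) (ω : Ω) (i : ℕ) : Sym 𝒳 := (X i ω, Y i ω, Z i ω)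

/-- A block of joint symbols as a triple of blocks. -/
def unzipBlk (L : ℕ) : Blk (Sym 𝒳) L ≃ Hist 𝒳 L where
  toFun v := (fun i ↦ (v i).1, fun i ↦ (v i).2.1, fun i ↦ (v i).2.2)
  invFun h i := (h.1 i, h.2.1 i, h.2.2 i)

lemma blockEvent_eq_window (X Y Z : ℕ → Ω → 𝒳) (t L : ℕ) (h : Hist 𝒳 L) :
    blockEvent X Y Z t L h.1 h.2.1 h.2.2 =
      {ω | window (jointPath X Y Z ω) L t = (unzipBlk L).symm h} := by
  ext ω
  simp [blockEvent, window, jointPath, unzipBlk, funext_iff]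

lemma statDist_eq_measureReal_window [MeasurableSpace Ω] (μ : Measure Ω) (h : Hist 𝒳 (k + 1)) :
    statDist μ X Y Z k h.1 h.2.1 h.2.2 =
      μ.real {ω | window (jointPath X Y Z ω) (k + 1) 0 = (unzipBlk (k + 1)).symm h} :=
  congrArg μ.real (blockEvent_eq_window X Y Z 0 (k + 1) h)

lemma empDist_eq_empFreq_window [DecidableEq 𝒳] (n : ℕ) (h : Hist 𝒳 (k + 1)) (ω : Ω) :
    empDist X Y Z k n h.1 h.2.1 h.2.2 ω =
      empFreq (window (jointPath X Y Z ω) (k + 1)) (n - k) ((unzipBlk (k + 1)).symm h) := by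
  rw [empDist, empDistSeq, empFreq, sum_boole, inv_mul_eq_div]
  congr 3
  ext t
  simp [window, jointPath, unzipBlk, funext_iff]

lemma measurable_jointPath [MeasurableSpace Ω] [MeasurableSpace 𝒳] [Countable 𝒳]
    (hmeas : MeasProc X Y Z) : Measurable (jointPath X Y Z) :=
  measurable_pi_lambda _ fun i ↦
    (measurable_to_countable' fun x ↦ (hmeas i x).1).prodMk
      ((measurable_to_countable' fun x ↦ (hmeas i x).2.1).prodMk
        (measurable_to_countable' fun x ↦ (hmeas i x).2.2))

lemma pushf_empDist [Fintype 𝒳] [DecidableEq 𝒳] {S : Type*} [DecidableEq S]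
    (g : Hist 𝒳 (k + 1) → S) (n : ℕ) (ω : Ω) :
    pushf g (fun w ↦ empDist X Y Z k n w.1 w.2.1 w.2.2 ω) =
      empFreq (fun t ↦ g (unzipBlk (k + 1) (window (jointPath X Y Z ω) (k + 1) t))) (n - k) := by
  simp only [empDist_eq_empFreq_window]
  rw [pushf_comp_symm, pushf_empFreq]

lemma pushf_statDist [Fintype 𝒳] [MeasurableSpace Ω] {μ : Measure Ω} [IsFiniteMeasure μ]
    {S : Type*} [DecidableEq S] (hmeas : MeasProc X Y Z) (g : Hist 𝒳 (k + 1) → S) :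
    pushf g (fun w ↦ statDist μ X Y Z k w.1 w.2.1 w.2.2) = fun x ↦
      μ.real {ω | g (unzipBlk (k + 1) (window (jointPath X Y Z ω) (k + 1) 0)) = x} := by
  let _ : MeasurableSpace 𝒳 := ⊤
  simp only [statDist_eq_measureReal_window]
  rw [pushf_comp_symm _ g fun v ↦ μ.real {ω | window (jointPath X Y Z ω) (k + 1) 0 = v},
    pushf_measureReal (measurable_window (measurable_jointPath hmeas) (k + 1) 0)]

lemma isStationary_jointPath [MeasurableSpace Ω] [MeasurableSpace 𝒳] [MeasurableSingletonClass 𝒳]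
    [Countable 𝒳] {μ : Measure Ω} (hmeas : MeasProc X Y Z) (hstat : Stationary μ X Y Z) :
    IsStationary μ (jointPath X Y Z) := by
  have map_singleton (L t : ℕ) (v : Blk (Sym 𝒳) L) :
      μ.map (fun ω ↦ window (jointPath X Y Z ω) L t) {v} =
        μ (blockEvent X Y Z t L (unzipBlk L v).1 (unzipBlk L v).2.1 (unzipBlk L v).2.2) := by
    rw [Measure.map_apply (measurable_window (measurable_jointPath hmeas) L t)
      (measurableSet_singleton v), blockEvent_eq_window, Equiv.symm_apply_apply]
    rfl
  intro L t
  refine Measure.ext_of_singleton fun v ↦ ?_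
  rw [map_singleton, map_singleton, hstat]

lemma isMarkov_jointPath [MeasurableSpace Ω] {μ : Measure Ω} {Q : Hist 𝒳 k → Sym 𝒳 → ℝ}
    (hMarkov : MarkovOfOrder μ X Y Z k Q) :
    IsMarkov μ (jointPath X Y Z) fun w ↦ Q (unzipBlk k w) := by
  intro t p s
  set early := unzipBlk t fun i ↦ p (Fin.castAdd k i) with h_early
  set recent := unzipBlk k fun i ↦ p (Fin.natAdd t i) with h_recent
  have past_eq : {ω | window (jointPath X Y Z ω) (t + k) 0 = p} =
      blockEvent X Y Z 0 t early.1 early.2.1 early.2.2 ∩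
        blockEvent X Y Z t k recent.1 recent.2.1 recent.2.2 := by
    rw [blockEvent_eq_window, blockEvent_eq_window, h_early, h_recent]
    ext ω
    simp [window, funext_iff, Fin.forall_fin_add]
  have letter_eq : {ω | jointPath X Y Z ω (t + k) = s} =
      {ω | X (t + k) ω = s.1 ∧ Y (t + k) ω = s.2.1 ∧ Z (t + k) ω = s.2.2} := by
    ext ω
    simp [jointPath, Prod.ext_iff]
  have := hMarkov t early.1 early.2.1 early.2.2 recent.1 recent.2.1 recent.2.2 s
  rwa [← past_eq, ← letter_eq] at this

end JointProcess

theorem sqrt_scaled_KL_emp_stat_tendsto_zero_general {𝒳 : Type*} [Fintype 𝒳] [DecidableEq 𝒳]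
    {Ω : Type*} [MeasurableSpace Ω] {μ : Measure Ω} [IsProbabilityMeasure μ]
    {X Y Z : ℕ → Ω → 𝒳} {k : ℕ} {Q : Hist 𝒳 k → Sym 𝒳 → ℝ} (hmeas : MeasProc X Y Z)
    (hQ : IsTransMat Q) (hQpos : ∀ h s, 0 < Q h s) (hMarkov : MarkovOfOrder μ X Y Z k Q)
    (hstat : Stationary μ X Y Z) {S : Type*} [Fintype S] [DecidableEq S]
    (g : Hist 𝒳 (k + 1) → S) {r : ℝ} (hr : r < 1) :
    ∀ᵐ ω ∂μ, Tendsto (fun n ↦ ((n - k : ℕ) : ℝ) ^ r *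
        KLfin (pushf g (fun w ↦ empDist X Y Z k n w.1 w.2.1 w.2.2 ω))
          (pushf g (fun w ↦ statDist μ X Y Z k w.1 w.2.1 w.2.2)))
      atTop (𝓝 0) := by
  let _ : MeasurableSpace 𝒳 := ⊤
  filter_upwards [ae_tendsto_rpow_mul_KLfin_empFreq_window (measurable_jointPath hmeas)
    (isMarkov_jointPath hMarkov) (isStationary_jointPath hmeas hstat) (fun w ↦ hQ.2 _)
    (fun w ↦ hQpos _) (fun v ↦ g (unzipBlk (k + 1) v)) hr] with ω hω
  simp only [pushf_empDist, pushf_statDist hmeas]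
  exact hω.comp (tendsto_sub_atTop_nat k)

/-- Under Assumptions 1–2, `√(n−k)·D(P̂^{(n)}‖P̄) → 0` almost surely,
and the same holds for every pair of corresponding marginals (pushforwards along any map
`g` into a finite set; `g = id` recovers the full distributions). -/
theorem sqrt_scaled_KL_emp_stat_tendsto_zero
    {𝒳 : Type*} [Fintype 𝒳] [DecidableEq 𝒳] [Nonempty 𝒳]
    {Ω : Type*} [MeasurableSpace Ω]
    (μ : MeasureTheory.Measure Ω) [MeasureTheory.IsProbabilityMeasure μ]
    (X Y Z : ℕ → Ω → 𝒳) (k : ℕ) (Q : Hist 𝒳 k → Sym 𝒳 → ℝ)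
    (hmeas : MeasProc X Y Z)
    (hQ : IsTransMat Q) (hQpos : ∀ h s, 0 < Q h s)
    (hMarkov : MarkovOfOrder μ X Y Z k Q)
    (hstat : Stationary μ X Y Z) :
    ∀ (S : Type) [Fintype S] [DecidableEq S]
      (g : Blk 𝒳 (k+1) × Blk 𝒳 (k+1) × Blk 𝒳 (k+1) → S),
      ∀ᵐ ω ∂μ,
        Tendsto (fun n => Real.sqrt ((n - k : ℕ) : ℝ) *
            KLfin (pushf g (fun w => empDist X Y Z k n w.1 w.2.1 w.2.2 ω))
              (pushf g (fun w => statDist μ X Y Z k w.1 w.2.1 w.2.2)))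
          atTop (𝓝 0) := by
  intro S _ _ g
  simpa only [Real.sqrt_eq_rpow] using
    sqrt_scaled_KL_emp_stat_tendsto_zero_general hmeas hQ hQpos hMarkov hstat g one_half_lt_one

end DIG
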